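/- arXiv:2308.07854 — 2 statements merged into one kernel-verified Lean document; each statement's English description precedes it below -/
import Mathlib

section
/- (Lemma: Infinite vs reduced-horizon value functions.) Let M ≥ 1 and let μ : X → U be a feedback law that is optimal for the M-horizon problem in the sense that V_M(x) = ℓ(x, μ(x)) + V_{M−1}(f(x, μ(x))) for all x ∈ X. Let α ∈ [0,1] be a real number and assume that for all x ∈ X, writing x⁺ = f(x, μ(x)), one has V_M(x⁺) ≤ V_{M−1}(x⁺) + (1−α)·ℓ(x, μ(x)). Then V_M satisfies the relaxed dynamic-programming inequality V_M(x) ≥ V_M(f(x, μ(x))) + α·ℓ(x, μ(x)) for all x, and consequently α·V_∞^μ(x) ≤ V_M(x) for all x ∈ X. -/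
open scoped ENNReal

/-- Open-loop trajectory: `traj f x u k` is the state after `k` steps of the
dynamics `f` starting from `x` under the input sequence `u`. -/
noncomputable def traj {X U : Type*} (f : X → U → X) (x : X) (u : ℕ → U) : ℕ → X
  | 0 => x
  | k + 1 => f (traj f x u k) (u k)

/-- Extension of a finite input sequence `u : Fin N → U` to `ℕ → U`
(arbitrary values after time `N`). -/
noncomputable def extSeq {U : Type*} [Nonempty U] {N : ℕ} (u : Fin N → U) : ℕ → U :=
  fun k => if h : k < N then u ⟨k, h⟩ else Classical.arbitrary U

/-- Finite-horizon value function
`V f ℓ N x = ⨅_{u : Fin N → U} ∑_{k=0}^{N-1} ℓ(x_u(k), u(k))`, with `V 0 ≡ 0`. -/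
noncomputable def V {X U : Type*} [Nonempty U] (f : X → U → X) (ℓ : X → U → ℝ≥0∞)
    (N : ℕ) (x : X) : ℝ≥0∞ :=
  ⨅ u : Fin N → U, ∑ k ∈ Finset.range N, ℓ (traj f x (extSeq u) k) (extSeq u k)

/-- Infinite-horizon value function
`Vinf f ℓ x = ⨅_{u : ℕ → U} ∑_{k=0}^{∞} ℓ(x_u(k), u(k))`. -/
noncomputable def Vinf {X U : Type*} (f : X → U → X) (ℓ : X → U → ℝ≥0∞) (x : X) : ℝ≥0∞ :=
  ⨅ u : ℕ → U, ∑' k : ℕ, ℓ (traj f x u k) (u k)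

/-- Closed-loop trajectory under the feedback law `μ`. -/
noncomputable def clTraj {X U : Type*} (f : X → U → X) (μ : X → U) (x : X) : ℕ → X
  | 0 => x
  | k + 1 => f (clTraj f μ x k) (μ (clTraj f μ x k))

/-- Infinite-horizon closed-loop cost of the feedback law `μ`:
`Vcl f ℓ μ x = ∑_{k=0}^{∞} ℓ(x_k, μ(x_k))`. -/
noncomputable def Vcl {X U : Type*} (f : X → U → X) (ℓ : X → U → ℝ≥0∞) (μ : X → U)
    (x : X) : ℝ≥0∞ :=
  ∑' k : ℕ, ℓ (clTraj f μ x k) (μ (clTraj f μ x k))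

theorem add_sum_range_le_of_succ_add_le {R : Type*} [AddCommMonoid R] [Preorder R]
    [AddLeftMono R] {w c : ℕ → R} (h : ∀ n, w (n + 1) + c n ≤ w n) (n : ℕ) :
    w n + ∑ k ∈ Finset.range n, c k ≤ w 0 := by
  induction n with
  | zero => simp
  | succ n ih =>
    calc w (n + 1) + ∑ k ∈ Finset.range (n + 1), c k
        = (w (n + 1) + c n) + ∑ k ∈ Finset.range n, c k := by
          rw [Finset.sum_range_succ_comm, add_assoc]
      _ ≤ w n + ∑ k ∈ Finset.range n, c k := by gcongr; exact h n
      _ ≤ w 0 := ih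

theorem tsum_le_of_succ_add_le {w c : ℕ → ℝ≥0∞} (h : ∀ n, w (n + 1) + c n ≤ w n) :
    ∑' n, c n ≤ w 0 :=
  ENNReal.tsum_le_of_sum_range_le fun n ↦
    le_add_self.trans (add_sum_range_le_of_succ_add_le h n)

/-- The relaxed dynamic-programming inequality: under the feedback law `μ`, the function `W`
decreases in each step by at least `a` times the running cost. The decrease is written
additively because subtraction truncates in `ℝ≥0∞`. -/
def RelaxedDP {X U : Type*} (f : X → U → X) (ℓ : X → U → ℝ≥0∞) (μ : X → U) (a : ℝ≥0∞)
    (W : X → ℝ≥0∞) : Prop :=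
  ∀ x, W (f x (μ x)) + a * ℓ x (μ x) ≤ W x

namespace RelaxedDP

variable {X U : Type*} {f : X → U → X} {ℓ : X → U → ℝ≥0∞} {μ : X → U} {a b : ℝ≥0∞}
  {W W' : X → ℝ≥0∞}

theorem of_add_le_one (hab : a + b ≤ 1)
    (hdecrease : ∀ x, ℓ x (μ x) + W' (f x (μ x)) ≤ W x)
    (hgap : ∀ x, W (f x (μ x)) ≤ W' (f x (μ x)) + b * ℓ x (μ x)) :
    RelaxedDP f ℓ μ a W := fun x ↦
  calc W (f x (μ x)) + a * ℓ x (μ x)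
      ≤ W' (f x (μ x)) + b * ℓ x (μ x) + a * ℓ x (μ x) := by gcongr; exact hgap x
    _ = (a + b) * ℓ x (μ x) + W' (f x (μ x)) := by ring
    _ ≤ 1 * ℓ x (μ x) + W' (f x (μ x)) := by gcongr
    _ = ℓ x (μ x) + W' (f x (μ x)) := by rw [one_mul]
    _ ≤ W x := hdecrease x

theorem mul_Vcl_le (h : RelaxedDP f ℓ μ a W) (x : X) : a * Vcl f ℓ μ x ≤ W x :=
  calc a * Vcl f ℓ μ x
      = ∑' k, a * ℓ (clTraj f μ x k) (μ (clTraj f μ x k)) := ENNReal.tsum_mul_left.symm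
    _ ≤ W (clTraj f μ x 0) :=
        tsum_le_of_succ_add_le (w := fun k ↦ W (clTraj f μ x k)) fun k ↦ h (clTraj f μ x k)

end RelaxedDP

/-- Infinite vs reduced-horizon value functions: if `μ` is optimal for the
`M`-horizon problem and
`V_M(x⁺) ≤ V_{M-1}(x⁺) + (1-α)·ℓ(x, μ(x))` with `x⁺ = f(x, μ(x))`, then `V_M`
satisfies the relaxed dynamic-programming inequality
`V_M(x) ≥ V_M(f(x, μ(x))) + α·ℓ(x, μ(x))`, and consequently
`α·V_∞^μ(x) ≤ V_M(x)` for all `x`. -/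
theorem reduced_horizon_relaxed_dp {X U : Type*} [Nonempty X] [Nonempty U]
    (f : X → U → X) (ℓ : X → U → ℝ≥0∞) (M : ℕ) (hM : 1 ≤ M) (μ : X → U)
    (hopt : ∀ x : X, V f ℓ M x = ℓ x (μ x) + V f ℓ (M - 1) (f x (μ x)))
    (α : ℝ) (hα : α ∈ Set.Icc (0 : ℝ) 1)
    (hcond : ∀ x : X,
      V f ℓ M (f x (μ x)) ≤
        V f ℓ (M - 1) (f x (μ x)) + ENNReal.ofReal (1 - α) * ℓ x (μ x)) :
    (∀ x : X, V f ℓ M x ≥ V f ℓ M (f x (μ x)) + ENNReal.ofReal α * ℓ x (μ x)) ∧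
      ∀ x : X, ENNReal.ofReal α * Vcl f ℓ μ x ≤ V f ℓ M x := by
  have hweights : ENNReal.ofReal α + ENNReal.ofReal (1 - α) = 1 := by
    rw [← ENNReal.ofReal_add hα.1 (sub_nonneg.2 hα.2), add_sub_cancel, ENNReal.ofReal_one]
  have hrelaxed : RelaxedDP f ℓ μ (ENNReal.ofReal α) (V f ℓ M) :=
    .of_add_le_one hweights.le (fun x ↦ (hopt x).ge) hcond
  exact ⟨hrelaxed, hrelaxed.mul_Vcl_le⟩
end

section
/- (Theorem 1, suboptimality estimate for the reduced-horizon feedback, relative form.) Under the hypotheses of Theorem 1 (M = N − N_B ≥ 2, real γ > 0 with (γ+1)^{M−2} > γ^M, Assumption (γ, M), and the relaxed-increment condition V_M(f(x,μ_M(x))) ≤ V_{M−1}(f(x,μ_M(x))) + (γ^M/(γ+1)^{M−2})·ℓ(x, μ_M(x)) for all x ∈ X), for every x ∈ X with 0 < V_∞(x) < ∞ one has (V_∞^{μ_M}(x) − V_∞(x)) / V_∞(x) ≤ γ^M / ((γ+1)^{M−2} − γ^M). -/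
open scoped ENNReal

/-!
A feedback `κ` that is greedy for the horizon `n + 1` satisfies
`ℓ(x, κ x) + V_n(f(x, κ x)) = V_{n+1}(x)`. If lengthening the horizon at the successor state costs
at most `c * ℓ(x, κ x)`, then substituting `V_{n+1}` for `V_n` there gives the relaxed
dynamic-programming inequality `(1 - c) * ℓ(x, κ x) + V_{n+1}(f(x, κ x)) ≤ V_{n+1}(x)`. Along the
closed loop it telescopes to `(1 - c) * V_∞^κ ≤ V_{n+1} ≤ V_∞`.
-/

theorem sum_range_add_le_of_add_succ_le {R : Type*} [AddCommMonoid R] [Preorder R]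
    [AddLeftMono R] {a w : ℕ → R} (h : ∀ k, a k + w (k + 1) ≤ w k) (n : ℕ) :
    ∑ k ∈ Finset.range n, a k + w n ≤ w 0 := by
  induction n with
  | zero => simp
  | succ n ih =>
    calc ∑ k ∈ Finset.range (n + 1), a k + w (n + 1)
        = ∑ k ∈ Finset.range n, a k + (a n + w (n + 1)) := by
          rw [Finset.sum_range_succ, add_assoc]
      _ ≤ ∑ k ∈ Finset.range n, a k + w n := by gcongr; exact h n
      _ ≤ w 0 := ih

theorem tsum_le_of_add_succ_le {a w : ℕ → ℝ≥0∞} (h : ∀ k, a k + w (k + 1) ≤ w k) :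
    ∑' k, a k ≤ w 0 :=
  ENNReal.tsum_le_of_sum_range_le fun n =>
    le_self_add.trans (sum_range_add_le_of_add_succ_le h n)

theorem sub_div_le_div_one_sub {a v c : ℝ≥0∞} (hc : c < 1) (hv₀ : v ≠ 0) (hv : v ≠ ⊤)
    (h : (1 - c) * a ≤ v) : (a - v) / v ≤ c / (1 - c) := by
  have hsub : (1 - c) * (a - v) ≤ c * v :=
    calc (1 - c) * (a - v) = (1 - c) * a - (1 - c) * v :=
          ENNReal.mul_sub fun _ _ => ENNReal.sub_ne_top ENNReal.one_ne_top
      _ ≤ v - (1 - c) * v := by gcongr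
      _ ≤ c * v := by
          rw [tsub_le_iff_right, ← add_mul, add_tsub_cancel_of_le hc.le, one_mul]
  rw [ENNReal.div_le_iff hv₀ hv, ← ENNReal.mul_div_right_comm,
    ENNReal.le_div_iff_mul_le (.inl (tsub_pos_of_lt hc).ne')
      (.inl (ENNReal.sub_ne_top ENNReal.one_ne_top)), mul_comm]
  exact hsub

theorem ofReal_div_div_one_sub {p q : ℝ} (hp : 0 ≤ p) (hpq : p < q) :
    ENNReal.ofReal (p / q) / (1 - ENNReal.ofReal (p / q)) = ENNReal.ofReal (p / (q - p)) := by
  have hq : 0 < q := hp.trans_lt hpq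
  have hlt : 0 < 1 - p / q := sub_pos.mpr ((div_lt_one hq).mpr hpq)
  rw [← ENNReal.ofReal_one, ← ENNReal.ofReal_sub 1 (div_nonneg hp hq.le),
    ← ENNReal.ofReal_div_of_pos hlt, one_sub_div hq.ne', div_div_div_cancel_right₀ hq.ne']

theorem extSeq_restrict_of_lt {U : Type*} [Nonempty U] (u : ℕ → U) {N k : ℕ} (hk : k < N) :
    extSeq (fun i : Fin N => u i) k = u k := by
  simp [extSeq, hk]

section ControlSystem

variable {X U : Type*} {f : X → U → X} {ℓ : X → U → ℝ≥0∞}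

theorem traj_congr {x : X} {u v : ℕ → U} {n : ℕ} (h : ∀ k < n, u k = v k) :
    traj f x u n = traj f x v n := by
  induction n with
  | zero => rfl
  | succ n ih =>
    simp only [traj]
    rw [ih fun k hk => h k (hk.trans n.lt_succ_self), h n n.lt_succ_self]

theorem V_le_sum_range [Nonempty U] (N : ℕ) (x : X) (u : ℕ → U) :
    V f ℓ N x ≤ ∑ k ∈ Finset.range N, ℓ (traj f x u k) (u k) := by
  refine (iInf_le _ fun i : Fin N => u i).trans_eq (Finset.sum_congr rfl fun k hk => ?_)
  have hkN : k < N := Finset.mem_range.mp hk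
  rw [extSeq_restrict_of_lt u hkN,
    traj_congr fun j hj => extSeq_restrict_of_lt u (hj.trans hkN)]

theorem V_le_Vinf [Nonempty U] (N : ℕ) (x : X) : V f ℓ N x ≤ Vinf f ℓ x :=
  le_iInf fun u => (V_le_sum_range N x u).trans (ENNReal.sum_le_tsum _)

theorem mul_Vcl_le_of_relaxed {κ : X → U} {W : X → ℝ≥0∞} {α : ℝ≥0∞}
    (h : ∀ x, α * ℓ x (κ x) + W (f x (κ x)) ≤ W x) (x : X) :
    α * Vcl f ℓ κ x ≤ W x := by
  rw [Vcl, ← ENNReal.tsum_mul_left]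
  exact tsum_le_of_add_succ_le (w := fun k => W (clTraj f κ x k)) fun k => h (clTraj f κ x k)

theorem one_sub_mul_Vcl_le {κ : X → U} {W W' : X → ℝ≥0∞} {c : ℝ≥0∞} (hc : c ≤ 1)
    (hdec : ∀ x, ℓ x (κ x) + W' (f x (κ x)) ≤ W x)
    (hinc : ∀ x, W (f x (κ x)) ≤ W' (f x (κ x)) + c * ℓ x (κ x)) (x : X) :
    (1 - c) * Vcl f ℓ κ x ≤ W x := by
  refine mul_Vcl_le_of_relaxed (fun y => ?_) x
  calc (1 - c) * ℓ y (κ y) + W (f y (κ y))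
      ≤ (1 - c) * ℓ y (κ y) + (W' (f y (κ y)) + c * ℓ y (κ y)) := by gcongr; exact hinc y
    _ = (1 - c + c) * ℓ y (κ y) + W' (f y (κ y)) := by ring
    _ = ℓ y (κ y) + W' (f y (κ y)) := by rw [tsub_add_cancel_of_le hc, one_mul]
    _ ≤ W y := hdec y

theorem reduced_horizon_suboptimality_rel_general [Nonempty U] {n : ℕ} {κ : X → U} {c : ℝ≥0∞}
    (hc : c < 1)
    (hDP : ∀ x, V f ℓ (n + 1) x = ℓ x (κ x) + V f ℓ n (f x (κ x)))
    (hinc : ∀ x, V f ℓ (n + 1) (f x (κ x)) ≤ V f ℓ n (f x (κ x)) + c * ℓ x (κ x))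
    {x : X} (hpos : 0 < Vinf f ℓ x) (hfin : Vinf f ℓ x < ⊤) :
    (Vcl f ℓ κ x - Vinf f ℓ x) / Vinf f ℓ x ≤ c / (1 - c) :=
  sub_div_le_div_one_sub hc hpos.ne' hfin.ne <|
    (one_sub_mul_Vcl_le hc.le (fun y => (hDP y).ge) hinc x).trans (V_le_Vinf (n + 1) x)

end ControlSystem

/-- Theorem 1 (relative form): under the hypotheses of Theorem 1, for every `x`
with `0 < V_∞(x) < ∞`,
`(V_∞^{μ_M}(x) - V_∞(x)) / V_∞(x) ≤ γ^M / ((γ+1)^{M-2} - γ^M)`. -/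
theorem reduced_horizon_suboptimality_rel {X U : Type*} [Nonempty X] [Nonempty U]
    (f : X → U → X) (ℓ : X → U → ℝ≥0∞) (N NB : ℕ) (hM : 2 ≤ N - NB)
    (γ : ℝ) (hγ : 0 < γ)
    (hstrict : γ ^ (N - NB) < (γ + 1) ^ (N - NB - 2))
    (μ : ℕ → X → U)
    (hDP : ∀ k, 2 ≤ k → k ≤ N - NB → ∀ x : X,
      V f ℓ k x = ℓ x (μ k x) + V f ℓ (k - 1) (f x (μ k x)))
    (h2 : ∀ x : X, V f ℓ 2 x ≤ ENNReal.ofReal (γ + 1) * V f ℓ 1 x)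
    (hk : ∀ k, 2 ≤ k → k ≤ N - NB → ∀ x : X,
      V f ℓ k x ≤ ENNReal.ofReal (γ + 1) * ℓ x (μ k x))
    (hinc : ∀ x : X,
      V f ℓ (N - NB) (f x (μ (N - NB) x)) ≤
        V f ℓ (N - NB - 1) (f x (μ (N - NB) x)) +
          ENNReal.ofReal (γ ^ (N - NB) / (γ + 1) ^ (N - NB - 2)) *
            ℓ x (μ (N - NB) x))
    (x : X) (hpos : 0 < Vinf f ℓ x) (hfin : Vinf f ℓ x < ⊤) :
    (Vcl f ℓ (μ (N - NB)) x - Vinf f ℓ x) / Vinf f ℓ x ≤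
      ENNReal.ofReal
        (γ ^ (N - NB) / ((γ + 1) ^ (N - NB - 2) - γ ^ (N - NB))) := by
  have hM' : N - NB - 1 + 1 = N - NB := by omega
  have hc : ENNReal.ofReal (γ ^ (N - NB) / (γ + 1) ^ (N - NB - 2)) < 1 :=
    ENNReal.ofReal_lt_one.mpr ((div_lt_one (by positivity)).mpr hstrict)
  rw [← ofReal_div_div_one_sub (by positivity) hstrict]
  exact reduced_horizon_suboptimality_rel_general (n := N - NB - 1) hc
    (by simpa only [hM'] using hDP _ hM le_rfl) (by simpa only [hM'] using hinc) hpos hfin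
end
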